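/- There is an absolute constant K₃ > 0 such that for every α ∈ (0, 1/1000] and all continuously differentiable Ω, η with compact support contained in (0,∞)×(0,π/2): ⟨L₁(Ω,η), Ω φ₁⟩ + ⟨L₂(Ω,η), η φ₁⟩ ≤ −(1/6) (‖Ω φ₁^{1/2}‖₂² + ‖η φ₁^{1/2}‖₂²) + K₃ (L₁₂(Ω)(0)² + ‖L̃₁₂(Ω)/R‖²_{L²(R)}). -/

import Mathlib

open Real MeasureTheory Set

noncomputable section

namespace Paper

/-- The domain `(0,∞) × (0,π/2)` in the `(R,β)` variables. -/
def Qdom : Set (ℝ × ℝ) := Set.Ioi (0:ℝ) ×ˢ Set.Ioo (0:ℝ) (Real.pi/2)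

/-- Inner product `⟨f,g⟩ = ∫₀^∞ ∫₀^{π/2} f g dβ dR`. -/
def inner2 (f g : ℝ → ℝ → ℝ) : ℝ :=
  ∫ R in Set.Ioi (0:ℝ), ∫ β in Set.Ioo (0:ℝ) (Real.pi/2), f R β * g R β

/-- The `L²` norm `‖f‖₂`. -/
def norm2 (f : ℝ → ℝ → ℝ) : ℝ := Real.sqrt (inner2 f f)

/-- `‖h‖_{L²(R)}` for functions of `R` alone. -/
def normR (h : ℝ → ℝ) : ℝ := Real.sqrt (∫ R in Set.Ioi (0:ℝ), (h R)^2)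

/-- `D_R = R ∂_R`. -/
def DR (f : ℝ → ℝ → ℝ) : ℝ → ℝ → ℝ := fun R β => R * deriv (fun r => f r β) R

/-- `D_R` for functions of `R` alone. -/
def DR1 (h : ℝ → ℝ) : ℝ → ℝ := fun R => R * deriv h R

/-- `D_β = sin(2β) ∂_β`. -/
def Dbeta (f : ℝ → ℝ → ℝ) : ℝ → ℝ → ℝ :=
  fun R β => Real.sin (2*β) * deriv (fun b => f R b) β

/-- `L₁₂(Ω)(R) = ∫_R^∞ ∫₀^{π/2} Ω(s,β) sin(2β) s⁻¹ dβ ds`. -/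
def L12 (Ω : ℝ → ℝ → ℝ) (R : ℝ) : ℝ :=
  ∫ s in Set.Ioi R, ∫ β in Set.Ioo (0:ℝ) (Real.pi/2), Ω s β * Real.sin (2*β) / s

/-- `L̃₁₂(Ω)(R) = L₁₂(Ω)(R) − L₁₂(Ω)(0)`. -/
def tL12 (Ω : ℝ → ℝ → ℝ) (R : ℝ) : ℝ := L12 Ω R - L12 Ω 0

/-- Compact support contained in the open domain `(0,∞)×(0,π/2)`. -/
def suppIn (f : ℝ → ℝ → ℝ) : Prop :=
  ∃ K : Set (ℝ × ℝ), IsCompact K ∧ K ⊆ Qdom ∧ ∀ x y : ℝ, (x, y) ∉ K → f x y = 0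

/-- Integrability over the domain. -/
def Integrable2 (f : ℝ → ℝ → ℝ) : Prop :=
  MeasureTheory.IntegrableOn (Function.uncurry f) Qdom

/-- `Γ(β) = (cos β)^α`. -/
def Γf (α : ℝ) (β : ℝ) : ℝ := Real.cos β ^ α

/-- The normalizing constant `c = (2/π)∫₀^{π/2} Γ(β) sin(2β) dβ`. -/
def cst (α : ℝ) : ℝ :=
  (2/Real.pi) * ∫ β in Set.Ioo (0:ℝ) (Real.pi/2), Γf α β * Real.sin (2*β)

/-- The approximate profile `Ω̄`. -/
def Ωbar (α : ℝ) : ℝ → ℝ → ℝ := fun R β => (α / cst α) * Γf α β * (3*R/(1+R)^2)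

/-- The approximate profile `η̄`. -/
def ηbar (α : ℝ) : ℝ → ℝ → ℝ := fun R β => (α / cst α) * Γf α β * (6*R/(1+R)^3)

/-- The singular weight `φ₁ = (1+R)⁴R⁻⁴ sin(2β)^{-σ}`, `σ = 99/100`. -/
def phi1 : ℝ → ℝ → ℝ := fun R β => (1+R)^4 / R^4 * Real.sin (2*β) ^ (-(99/100 : ℝ))

/-- The singular weight `φ₂ = (1+R)⁴R⁻⁴ sin(2β)^{-γ}`, `γ = 1 + α/10`. -/
def phi2 (α : ℝ) : ℝ → ℝ → ℝ := fun R β => (1+R)^4 / R^4 * Real.sin (2*β) ^ (-(1 + α/10))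

/-- The singular weight `ψ₁ = (1+R)⁴R⁻⁴ (sin β cos β)^{-σ}`. -/
def psi1 : ℝ → ℝ → ℝ := fun R β =>
  (1+R)^4 / R^4 * (Real.sin β * Real.cos β) ^ (-(99/100 : ℝ))

/-- The singular weight `ψ₂ = (1+R)⁴R⁻⁴ (sin β)^{-σ}(cos β)^{-γ}`. -/
def psi2 (α : ℝ) : ℝ → ℝ → ℝ := fun R β =>
  (1+R)^4 / R^4 * Real.sin β ^ (-(99/100 : ℝ)) * Real.cos β ^ (-(1 + α/10))

/-- `c_ω = −(2/(πα)) L₁₂(Ω)(0)`. -/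
def cω (α : ℝ) (Ω : ℝ → ℝ → ℝ) : ℝ := -(2/(Real.pi*α)) * L12 Ω 0

/-- The linearized operator `L₁`. -/
def opL1 (α : ℝ) (Ω η : ℝ → ℝ → ℝ) : ℝ → ℝ → ℝ := fun R β =>
  - DR Ω R β - (3/(1+R)) * Dbeta Ω R β - Ω R β + η R β
  + cω α Ω * (Ωbar α R β - DR (Ωbar α) R β)

/-- The linearized operator `L₂`. -/
def opL2 (α : ℝ) (Ω η : ℝ → ℝ → ℝ) : ℝ → ℝ → ℝ := fun R β =>
  - DR η R β - (3/(1+R)) * Dbeta η R β + (-2 + 3/(1+R)) * η R β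
  + (2/(Real.pi*α)) * tL12 Ω R * ηbar α R β
  + cω α Ω * (ηbar α R β - DR (ηbar α) R β)

/-- `ξ̄` in Cartesian variables. -/
def ξbarC (α : ℝ) (x y : ℝ) : ℝ :=
  -(18*α^2 / cst α) * ∫ z in Set.Ioo (0:ℝ) x,
      (y/(y^2+z^2)) * (z ^ α * (z^2+y^2) ^ (α/2) / (1 + (z^2+y^2) ^ (α/2))^4)

/-- `ξ̄` in the `(R,β)` variables, via `x = R^{1/α} cos β`, `y = R^{1/α} sin β`. -/
def ξbar (α : ℝ) : ℝ → ℝ → ℝ := fun R β =>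
  ξbarC α (R ^ (1/α) * Real.cos β) (R ^ (1/α) * Real.sin β)

/-- The linearized operator `L₃`. -/
def opL3 (α : ℝ) (Ω ξ : ℝ → ℝ → ℝ) : ℝ → ℝ → ℝ := fun R β =>
  - DR ξ R β - (3/(1+R)) * Dbeta ξ R β + (-2 - 3/(1+R)) * ξ R β
  - (2/(Real.pi*α)) * tL12 Ω R * ξbar α R β
  + cω α Ω * (3 * ξbar α R β - DR (ξbar α) R β)

/-- Weighted Sobolev norm `H^m` with radial weight `w1` and angular weight `w2`:
`‖f‖ = Σ_{0≤k≤m} ‖(D_R^k f)√w1‖₂ + Σ_{i+j≤m−1} ‖(D_R^i D_β^{j+1} f)√w2‖₂`. -/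
def Hnorm (m : ℕ) (w1 w2 : ℝ → ℝ → ℝ) (f : ℝ → ℝ → ℝ) : ℝ :=
  (∑ k ∈ Finset.range (m+1),
    norm2 (fun R β => DR^[k] f R β * Real.sqrt (w1 R β)))
  + ∑ p ∈ (Finset.range (m+1) ×ˢ Finset.range (m+1)).filter
      (fun p => p.1 + p.2 + 1 ≤ m),
      norm2 (fun R β => DR^[p.1] (Dbeta^[p.2+1] f) R β * Real.sqrt (w2 R β))

/-- Sup of `|f|` over the domain `(0,∞)×(0,π/2)`. -/
def supDom (f : ℝ → ℝ → ℝ) : ℝ :=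
  ⨆ (R : Set.Ioi (0:ℝ)) (β : Set.Ioo (0:ℝ) (Real.pi/2)), |f R.1 β.1|

/-- The weighted `C¹` norm. -/
def C1norm (α : ℝ) (f : ℝ → ℝ → ℝ) : ℝ :=
  supDom f + supDom (fun R β => (1+R)/R * DR f R β)
  + supDom (fun R β =>
      (1 + (R * Real.sin (2*β) ^ α) ^ (-(1/40 : ℝ))) * Dbeta f R β)

/-- Boundedness of `f` on the domain. -/
def BddDom (f : ℝ → ℝ → ℝ) : Prop :=
  ∃ M : ℝ, ∀ R ∈ Set.Ioi (0:ℝ), ∀ β ∈ Set.Ioo (0:ℝ) (Real.pi/2), |f R β| ≤ M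

/-- Finiteness of the weighted `C¹` norm. -/
def C1Fin (α : ℝ) (f : ℝ → ℝ → ℝ) : Prop :=
  BddDom f ∧ BddDom (fun R β => (1+R)/R * DR f R β) ∧
  BddDom (fun R β => (1 + (R * Real.sin (2*β) ^ α) ^ (-(1/40 : ℝ))) * Dbeta f R β)

/-- The weighted `W^{l,∞}` norm. -/
def Wnorm (α : ℝ) (l : ℕ) (f : ℝ → ℝ → ℝ) : ℝ :=
  (∑ k ∈ Finset.range (l+1), supDom (DR^[k] f))
  + ∑ p ∈ (Finset.range (l+1) ×ˢ Finset.range (l+1)).filter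
      (fun p => p.1 + p.2 ≤ l ∧ 1 ≤ p.2),
      supDom (fun R β => Real.sin (2*β) ^ (-(α/5)) *
        DR^[p.1] (fun R' β' => Dbeta^[p.2] f R' β' / (α/10 + Real.sin (2*β'))) R β)

/-- Finiteness of the `W^{l,∞}` norm. -/
def WFin (α : ℝ) (l : ℕ) (f : ℝ → ℝ → ℝ) : Prop :=
  (∀ k ≤ l, BddDom (DR^[k] f)) ∧
  ∀ k j : ℕ, k + j ≤ l → 1 ≤ j →
    BddDom (fun R β => Real.sin (2*β) ^ (-(α/5)) *
      DR^[k] (fun R' β' => Dbeta^[j] f R' β' / (α/10 + Real.sin (2*β'))) R β)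

/-- `I(f)(x,y) = ∫₀ˣ f(z,y)/z dz`. -/
def Ifun (f : ℝ → ℝ → ℝ) : ℝ → ℝ → ℝ := fun x y => ∫ z in Set.Ioo (0:ℝ) x, f z y / z

/-- `D_S g = (1/α)(z ∂_z g + y ∂_y g)` in Cartesian variables. -/
def DScart (α : ℝ) (g : ℝ → ℝ → ℝ) : ℝ → ℝ → ℝ := fun a b =>
  (1/α) * (a * deriv (fun a' => g a' b) a + b * deriv (fun b' => g a b') b)

/-- `D_τ g = 2y ∂_y g − 2α (y²/(y²+z²)) D_S g` in Cartesian variables. -/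
def DTcart (α : ℝ) (g : ℝ → ℝ → ℝ) : ℝ → ℝ → ℝ := fun a b =>
  2*b * deriv (fun b' => g a b') b - 2*α*(b^2/(b^2+a^2)) * DScart α g a b

/-!
Integrating by parts, transport by the field `(R, 3 sin(2β)/(1+R))` contributes to the
`φ₁`-weighted energy only through half the divergence of `φ₁` times the field. The singularity of
`φ₁` at `R = 0` makes this contribution, relative to `φ₁`, at most `1/2 - 1.97 t` with
`t = 1/(1+R)`, and together with the local lower-order terms of `L₁` and `L₂` it leaves a quadratic
form in `(Ω, η)` that is `≤ -(1/5)(Ω² + η²)` for every `t ∈ [0,1]`.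

What remains are the nonlocal terms, which are explicit profiles times the scalars `L₁₂(Ω)(0)` and
`L̃₁₂(Ω)(R)`. Young's inequality absorbs them at the price of lowering `1/5` to `1/6`. Their
weighted squares are integrable: `f - D_R f` vanishes to second order at `R = 0` for both profiles,
which cancels `R⁻⁴`; `η̄` vanishes to first order, which leaves `(L̃₁₂(Ω)/R)²`; and `sin(2β)^{-σ}`
is integrable because `σ < 1`.
-/

open Function (uncurry)

section IntegrationByParts

lemma integrable_mul_of_tsupport_subset {X : Type*} [TopologicalSpace X] [MeasurableSpace X]
    [OpensMeasurableSpace X] {μ : Measure X} [IsFiniteMeasureOnCompacts μ] {U : Set X}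
    {f g : X → ℝ} (hU : IsOpen U) (hf : Continuous f) (hfc : HasCompactSupport f)
    (hfU : tsupport f ⊆ U) (hg : ContinuousOn g U) : Integrable (fun x ↦ f x * g x) μ :=
  Continuous.integrable_of_hasCompactSupport
    ((hf.continuousOn.mul hg).continuous_of_tsupport_subset hU
      ((tsupport_mul_subset_left (f := f) (g := g)).trans hfU)) hfc.mul_right

variable {E : Type*} [NormedAddCommGroup E] [NormedSpace ℝ E] [FiniteDimensional ℝ E]
  [MeasurableSpace E] [BorelSpace E] {μ : Measure E} [μ.IsAddHaarMeasure]

lemma setIntegral_lineDeriv_mul_self_mul {U : Set E} {f f' w w' : E → ℝ} {v : E} (hU : IsOpen U)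
    (hf : Continuous f) (hf' : Continuous f') (hfc : HasCompactSupport f) (hfU : tsupport f ⊆ U)
    (hw : ContinuousOn w U) (hw' : ContinuousOn w' U)
    (hff' : ∀ x, HasLineDerivAt ℝ f (f' x) x v)
    (hww' : ∀ x ∈ U, HasLineDerivAt ℝ w (w' x) x v) :
    ∫ x in U, f x * (f' x * w x) ∂μ = -(1 / 2) * ∫ x in U, f x * (f x * w' x) ∂μ := by
  have eq_integral (g : E → ℝ) : ∫ x in U, f x * g x ∂μ = ∫ x, f x * g x ∂μ :=
    setIntegral_eq_integral_of_forall_compl_eq_zero fun x hx ↦ by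
      rw [image_eq_zero_of_notMem_tsupport (f := f) fun h ↦ hx (hfU h), zero_mul]
  have integrable_mul {g : E → ℝ} (hg : ContinuousOn g U) : Integrable (fun x ↦ f x * g x) μ :=
    integrable_mul_of_tsupport_subset hU hf hfc hfU hg
  have hsq (x : E) : HasLineDerivAt ℝ (fun x ↦ f x ^ 2) (2 * f x * f' x) x v := by
    simpa [HasLineDerivAt] using HasDerivAt.fun_pow (hff' x) 2
  have hsq_supp : tsupport (fun x ↦ f x ^ 2) ⊆ U := by
    refine (closure_mono fun x hx ↦ ?_).trans hfU
    exact fun hfx ↦ hx (by simp [hfx])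
  have parts : ∫ x, f x ^ 2 * w' x ∂μ = -∫ x, 2 * f x * f' x * w x ∂μ :=
    integral_bilinear_hasLineDerivAt_right_eq_neg_left_of_integrable
      (B := ContinuousLinearMap.mul ℝ ℝ)
      (by simpa [mul_comm, mul_assoc, mul_left_comm] using
        (integrable_mul (hf'.continuousOn.mul hw)).const_mul 2)
      (by simpa [sq, mul_assoc] using integrable_mul (hf.continuousOn.mul hw'))
      (by simpa [sq, mul_assoc] using integrable_mul (hf.continuousOn.mul hw))
      (fun x _ ↦ hsq x) (fun x hx ↦ hww' x (hsq_supp hx))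
  simp only [sq, mul_assoc, integral_const_mul] at parts
  rw [eq_integral, eq_integral, parts]
  ring

end IntegrationByParts

section PartialDerivatives

variable {E F : Type*} [NormedAddCommGroup E] [NormedSpace ℝ E] [NormedAddCommGroup F]
  [NormedSpace ℝ F]

lemma continuous_deriv_of_contDiff_uncurry {f : E → ℝ → F} {g : E → ℝ}
    (hf : ContDiff ℝ 1 (uncurry f)) (hg : Continuous g) :
    Continuous fun x ↦ deriv (f x) (g x) := by
  simp_rw [← fderiv_apply_one_eq_deriv]
  exact (hf.fderiv_apply (contDiff_zero.2 hg) contDiff_const (by norm_num)).continuous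

lemma hasLineDerivAt_uncurry_fst {f : ℝ → ℝ → F} {f' : F} {x y : ℝ}
    (h : HasDerivAt (fun r ↦ f r y) f' x) : HasLineDerivAt ℝ (uncurry f) f' (x, y) (1, 0) := by
  simpa [HasLineDerivAt] using HasDerivAt.comp_const_add x 0 (by simpa using h)

lemma hasLineDerivAt_uncurry_snd {f : ℝ → ℝ → F} {f' : F} {x y : ℝ}
    (h : HasDerivAt (f x) f' y) : HasLineDerivAt ℝ (uncurry f) f' (x, y) (0, 1) := by
  simpa [HasLineDerivAt] using HasDerivAt.comp_const_add y 0 (by simpa using h)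

end PartialDerivatives

section Domain

lemma isOpen_Qdom : IsOpen Qdom := isOpen_Ioi.prod isOpen_Ioo

lemma measurableSet_Qdom : MeasurableSet Qdom := isOpen_Qdom.measurableSet

lemma sin_two_mul_pos {β : ℝ} (hβ : β ∈ Ioo 0 (π / 2)) : 0 < sin (2 * β) :=
  sin_pos_of_pos_of_lt_pi (by linarith [hβ.1]) (by linarith [hβ.2])

variable {f g : ℝ → ℝ → ℝ}

lemma suppIn.hasCompactSupport (hf : suppIn f) : HasCompactSupport (uncurry f) := by
  obtain ⟨K, hK, -, hfK⟩ := hf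
  exact .intro hK fun p hp ↦ hfK p.1 p.2 hp

lemma suppIn.tsupport_subset (hf : suppIn f) : tsupport (uncurry f) ⊆ Qdom := by
  obtain ⟨K, hK, hKQ, hfK⟩ := hf
  refine (closure_minimal (fun p hp ↦ ?_) hK.isClosed).trans hKQ
  exact by_contra fun hpK ↦ hp (hfK p.1 p.2 hpK)

lemma suppIn.exists_radius_pos (hf : suppIn f) : ∃ a > 0, ∀ R < a, ∀ β, f R β = 0 := by
  obtain ⟨K, hK, hKQ, hfK⟩ := hf
  rcases K.eq_empty_or_nonempty with rfl | hne
  · exact ⟨1, one_pos, fun R _ β ↦ hfK R β (notMem_empty _)⟩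
  · obtain ⟨p, hpK, hp⟩ := hK.exists_isMinOn hne continuous_fst.continuousOn
    exact ⟨p.1, (hKQ hpK).1, fun R hR β ↦ hfK R β fun h ↦ hR.not_ge (hp h)⟩

lemma suppIn.integrable_mul (hs : suppIn f) (hf : Continuous (uncurry f))
    (hg : ContinuousOn (uncurry g) Qdom) : Integrable (uncurry fun R β ↦ f R β * g R β) :=
  integrable_mul_of_tsupport_subset isOpen_Qdom hf hs.hasCompactSupport hs.tsupport_subset hg

lemma suppIn.integrable2_mul (hs : suppIn f) (hf : Continuous (uncurry f))
    (hg : ContinuousOn (uncurry g) Qdom) : Integrable2 fun R β ↦ f R β * g R β :=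
  (hs.integrable_mul hf hg).integrableOn

lemma inner2_eq_setIntegral (h : Integrable2 fun R β ↦ f R β * g R β) :
    inner2 f g = ∫ p in Qdom, f p.1 p.2 * g p.1 p.2 :=
  (setIntegral_prod _ h).symm

lemma sq_norm2_mul_sqrt {w : ℝ → ℝ → ℝ} (hw : ∀ p ∈ Qdom, 0 ≤ w p.1 p.2)
    (hfw : Integrable2 fun R β ↦ f R β ^ 2 * w R β) :
    norm2 (fun R β ↦ f R β * √(w R β)) ^ 2 = ∫ p in Qdom, f p.1 p.2 ^ 2 * w p.1 p.2 := by
  have hsq : ∀ p ∈ Qdom, f p.1 p.2 * √(w p.1 p.2) * (f p.1 p.2 * √(w p.1 p.2)) =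
      f p.1 p.2 ^ 2 * w p.1 p.2 := fun p hp ↦ by
    rw [mul_mul_mul_comm, mul_self_sqrt (hw p hp), sq]
  have hint : Integrable2 fun R β ↦ f R β * √(w R β) * (f R β * √(w R β)) :=
    hfw.congr_fun (fun p hp ↦ (hsq p hp).symm) measurableSet_Qdom
  have hnonneg : 0 ≤ inner2 (fun R β ↦ f R β * √(w R β)) fun R β ↦ f R β * √(w R β) :=
    integral_nonneg fun R ↦ integral_nonneg fun β ↦ mul_self_nonneg _
  rw [norm2, sq_sqrt hnonneg, inner2_eq_setIntegral hint]
  exact setIntegral_congr_fun measurableSet_Qdom hsq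

lemma sq_normR (h : ℝ → ℝ) : normR h ^ 2 = ∫ R in Ioi 0, h R ^ 2 :=
  sq_sqrt (integral_nonneg fun R ↦ sq_nonneg (h R))

end Domain

section Weight

lemma phi1_nonneg {p : ℝ × ℝ} (hp : p ∈ Qdom) : 0 ≤ phi1 p.1 p.2 := by
  have hsin := (sin_two_mul_pos hp.2).le
  unfold phi1
  positivity

lemma continuousOn_phi1 : ContinuousOn (uncurry phi1) Qdom := by
  have hradial : ∀ p ∈ Qdom, p.1 ^ 4 ≠ 0 := fun p hp ↦ pow_ne_zero 4 (mem_Ioi.1 hp.1).ne'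
  exact .mul (.div (by fun_prop) (by fun_prop) hradial)
    (.rpow_const (by fun_prop) fun p hp ↦ .inl (sin_two_mul_pos hp.2).ne')

lemma hasDerivAt_mul_phi1 {R : ℝ} (hR : 0 < R) (β : ℝ) :
    HasDerivAt (fun r ↦ r * phi1 r β) ((1 - 4 / (1 + R)) * phi1 R β) R := by
  have hnum : HasDerivAt (fun r : ℝ ↦ (1 + r) ^ 4) (4 * (1 + R) ^ 3) R := by
    simpa using ((hasDerivAt_id R).const_add 1).fun_pow 4
  have hprod := (hasDerivAt_id R).fun_mul
    ((hnum.fun_div (hasDerivAt_pow 4 R) (by positivity)).mul_const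
      (sin (2 * β) ^ (-(99 / 100 : ℝ))))
  refine hprod.congr_deriv ?_
  simp only [phi1, id]
  field_simp
  ring

lemma hasDerivAt_sin_two_mul_mul_phi1 (R : ℝ) {β : ℝ} (hβ : β ∈ Ioo 0 (π / 2)) :
    HasDerivAt (fun b ↦ sin (2 * b) * phi1 R b) (1 / 50 * cos (2 * β) * phi1 R β) β := by
  have hsin : HasDerivAt (fun b ↦ sin (2 * b)) (cos (2 * β) * 2) β := by
    simpa using ((hasDerivAt_id β).const_mul 2).sin
  have hpos := sin_two_mul_pos hβ
  have hprod := hsin.fun_mul ((hsin.rpow_const (p := -(99 / 100)) (.inl hpos.ne')).const_mul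
    ((1 + R) ^ 4 / R ^ 4))
  refine hprod.congr_deriv ?_
  rw [rpow_sub_one hpos.ne']
  simp only [phi1]
  field_simp
  ring

end Weight

section EnergyIdentity

/-- The transport operator `D_R + 3/(1+R) D_β` common to `L₁` and `L₂`. -/
def transport (f : ℝ → ℝ → ℝ) (R β : ℝ) : ℝ := DR f R β + 3 / (1 + R) * Dbeta f R β

/-- Half the divergence of `φ₁` times the transport field `(R, 3 sin(2β)/(1+R))`, divided by `φ₁`:
the factor by which `-transport f` contributes to the `φ₁`-weighted energy density `f² φ₁`. -/
def growthRate (R β : ℝ) : ℝ := 1 / 2 - 2 / (1 + R) + 3 / 100 * cos (2 * β) / (1 + R)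

lemma growthRate_le {R : ℝ} (hR : 0 < R) (β : ℝ) :
    growthRate R β ≤ 1 / 2 - 197 / 100 * (1 / (1 + R)) := by
  have hcos : 3 / 100 * cos (2 * β) / (1 + R) ≤ 3 / 100 / (1 + R) := by
    gcongr
    linarith [cos_le_one (2 * β)]
  calc growthRate R β ≤ 1 / 2 - 2 / (1 + R) + 3 / 100 / (1 + R) := by
        unfold growthRate; gcongr
    _ = 1 / 2 - 197 / 100 * (1 / (1 + R)) := by ring

variable {f g : ℝ → ℝ → ℝ}

lemma one_add_ne_zero_of_mem_Qdom {p : ℝ × ℝ} (hp : p ∈ Qdom) : 1 + p.1 ≠ 0 := by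
  have : 0 < p.1 := hp.1
  positivity

lemma continuousOn_div_one_add (c : ℝ) : ContinuousOn (fun p : ℝ × ℝ ↦ c / (1 + p.1)) Qdom :=
  .div (by fun_prop) (by fun_prop) fun _ ↦ one_add_ne_zero_of_mem_Qdom

lemma continuous_deriv_fst (hf : ContDiff ℝ 1 (uncurry f)) :
    Continuous fun p : ℝ × ℝ ↦ deriv (fun r ↦ f r p.2) p.1 :=
  continuous_deriv_of_contDiff_uncurry (f := fun (p : ℝ × ℝ) r ↦ f r p.2) (by fun_prop)
    continuous_fst

lemma continuous_deriv_snd (hf : ContDiff ℝ 1 (uncurry f)) :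
    Continuous fun p : ℝ × ℝ ↦ deriv (f p.1) p.2 :=
  continuous_deriv_of_contDiff_uncurry (f := fun (p : ℝ × ℝ) r ↦ f p.1 r) (by fun_prop)
    continuous_snd

lemma setIntegral_mul_DR_mul_phi1 (hf : ContDiff ℝ 1 (uncurry f)) (hs : suppIn f) :
    ∫ p in Qdom, f p.1 p.2 * (DR f p.1 p.2 * phi1 p.1 p.2) =
      -∫ p in Qdom, f p.1 p.2 * ((1 / 2 - 2 / (1 + p.1)) * f p.1 p.2 * phi1 p.1 p.2) := by
  have hw' : ContinuousOn (fun p : ℝ × ℝ ↦ (1 - 4 / (1 + p.1)) * phi1 p.1 p.2) Qdom :=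
    (continuousOn_const.sub (continuousOn_div_one_add 4)).mul continuousOn_phi1
  have parts := setIntegral_lineDeriv_mul_self_mul (μ := volume) (f := uncurry f)
    (w := fun p ↦ p.1 * phi1 p.1 p.2) (v := ((1 : ℝ), (0 : ℝ))) isOpen_Qdom hf.continuous
    (continuous_deriv_fst hf) hs.hasCompactSupport hs.tsupport_subset
    (continuousOn_fst.mul continuousOn_phi1) hw'
    (fun p ↦ hasLineDerivAt_uncurry_fst (DifferentiableAt.hasDerivAt
      ((hf.comp (contDiff_prodMk_left p.2)).differentiable one_ne_zero p.1)))
    fun p hp ↦ hasLineDerivAt_uncurry_fst (f := fun R β ↦ R * phi1 R β)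
      (hasDerivAt_mul_phi1 hp.1 p.2)
  rw [neg_mul, ← integral_const_mul] at parts
  refine .trans ?_ (parts.trans (congrArg _ ?_)) <;> congr with p <;>
    simp only [DR, uncurry] <;> ring

lemma setIntegral_mul_Dbeta_mul_phi1 (hf : ContDiff ℝ 1 (uncurry f)) (hs : suppIn f) :
    ∫ p in Qdom, f p.1 p.2 * (3 / (1 + p.1) * Dbeta f p.1 p.2 * phi1 p.1 p.2) =
      -∫ p in Qdom,
        f p.1 p.2 * (3 / 100 * cos (2 * p.2) / (1 + p.1) * f p.1 p.2 * phi1 p.1 p.2) := by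
  have hw : ContinuousOn (fun p : ℝ × ℝ ↦ 3 / (1 + p.1) * (sin (2 * p.2) * phi1 p.1 p.2)) Qdom :=
    (continuousOn_div_one_add 3).mul (.mul (by fun_prop) continuousOn_phi1)
  have hw' : ContinuousOn
      (fun p : ℝ × ℝ ↦ 3 / (1 + p.1) * (1 / 50 * cos (2 * p.2) * phi1 p.1 p.2)) Qdom :=
    (continuousOn_div_one_add 3).mul (.mul (by fun_prop) continuousOn_phi1)
  have parts := setIntegral_lineDeriv_mul_self_mul (μ := volume) (f := uncurry f)
    (v := ((0 : ℝ), (1 : ℝ))) isOpen_Qdom hf.continuous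
    (continuous_deriv_snd hf) hs.hasCompactSupport hs.tsupport_subset hw hw'
    (fun p ↦ hasLineDerivAt_uncurry_snd (DifferentiableAt.hasDerivAt
      ((hf.comp (contDiff_prodMk_right p.1)).differentiable one_ne_zero p.2)))
    fun p hp ↦ hasLineDerivAt_uncurry_snd (f := fun R β ↦ 3 / (1 + R) * (sin (2 * β) * phi1 R β))
      ((hasDerivAt_sin_two_mul_mul_phi1 p.1 hp.2).const_mul _)
  rw [neg_mul, ← integral_const_mul] at parts
  refine .trans ?_ (parts.trans (congrArg _ ?_)) <;> congr with p <;>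
    simp only [Dbeta, uncurry] <;> ring

lemma suppIn.integrable2_mul_mul_phi1 (hs : suppIn f) (hf : Continuous (uncurry f))
    (hg : ContinuousOn (uncurry g) Qdom) : Integrable2 fun R β ↦ f R β * (g R β * phi1 R β) :=
  hs.integrable2_mul hf (hg.mul continuousOn_phi1)

lemma continuousOn_DR (hf : ContDiff ℝ 1 (uncurry f)) : ContinuousOn (uncurry (DR f)) Qdom :=
  (continuous_fst.mul (continuous_deriv_fst hf)).continuousOn

lemma continuousOn_Dbeta_div (hf : ContDiff ℝ 1 (uncurry f)) :
    ContinuousOn (uncurry fun R β ↦ 3 / (1 + R) * Dbeta f R β) Qdom :=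
  (continuousOn_div_one_add 3).mul
    ((by fun_prop : Continuous fun p : ℝ × ℝ ↦ sin (2 * p.2)).mul
      (continuous_deriv_snd hf)).continuousOn

lemma continuousOn_transport (hf : ContDiff ℝ 1 (uncurry f)) :
    ContinuousOn (uncurry (transport f)) Qdom :=
  (continuousOn_DR hf).add (continuousOn_Dbeta_div hf)

lemma continuousOn_growthRate : ContinuousOn (uncurry growthRate) Qdom :=
  (continuousOn_const.sub (continuousOn_div_one_add 2)).add
    (.div (by fun_prop) (by fun_prop) fun _ ↦ one_add_ne_zero_of_mem_Qdom)

lemma suppIn.setIntegral_mul_add_mul_phi1 {h : ℝ → ℝ → ℝ} (hs : suppIn f)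
    (hf : Continuous (uncurry f)) (hg : ContinuousOn (uncurry g) Qdom)
    (hh : ContinuousOn (uncurry h) Qdom) :
    ∫ p in Qdom, f p.1 p.2 * ((g p.1 p.2 + h p.1 p.2) * phi1 p.1 p.2) =
      (∫ p in Qdom, f p.1 p.2 * (g p.1 p.2 * phi1 p.1 p.2)) +
        ∫ p in Qdom, f p.1 p.2 * (h p.1 p.2 * phi1 p.1 p.2) := by
  simp only [add_mul, mul_add]
  exact integral_add (hs.integrable2_mul_mul_phi1 hf hg) (hs.integrable2_mul_mul_phi1 hf hh)

lemma setIntegral_mul_transport_mul_phi1 (hf : ContDiff ℝ 1 (uncurry f)) (hs : suppIn f) :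
    ∫ p in Qdom, f p.1 p.2 * (transport f p.1 p.2 * phi1 p.1 p.2) =
      -∫ p in Qdom, f p.1 p.2 * (growthRate p.1 p.2 * f p.1 p.2 * phi1 p.1 p.2) := by
  have hfc := hf.continuous.continuousOn (s := Qdom)
  have hR : ContinuousOn (uncurry fun R β ↦ (1 / 2 - 2 / (1 + R)) * f R β) Qdom :=
    (continuousOn_const.sub (continuousOn_div_one_add 2)).mul hfc
  have hβ : ContinuousOn (uncurry fun R β ↦ 3 / 100 * cos (2 * β) / (1 + R) * f R β) Qdom :=
    .mul (.div (by fun_prop) (by fun_prop) fun _ ↦ one_add_ne_zero_of_mem_Qdom) hfc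
  simp only [transport, growthRate, add_mul _ _ (f _ _)]
  rw [hs.setIntegral_mul_add_mul_phi1 hf.continuous (continuousOn_DR hf)
      (continuousOn_Dbeta_div hf), hs.setIntegral_mul_add_mul_phi1 hf.continuous hR hβ,
    setIntegral_mul_DR_mul_phi1 hf hs, setIntegral_mul_Dbeta_mul_phi1 hf hs, neg_add]

lemma inner2_neg_transport_add (hf : ContDiff ℝ 1 (uncurry f)) (hs : suppIn f)
    (hg : ContinuousOn (uncurry g) Qdom) :
    inner2 (fun R β ↦ -transport f R β + g R β) (fun R β ↦ f R β * phi1 R β) =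
      ∫ p in Qdom, f p.1 p.2 *
        ((growthRate p.1 p.2 * f p.1 p.2 + g p.1 p.2) * phi1 p.1 p.2) := by
  have hT : ContinuousOn (uncurry fun R β ↦ -transport f R β) Qdom :=
    (continuousOn_transport hf).neg
  have hD : ContinuousOn (uncurry fun R β ↦ growthRate R β * f R β) Qdom :=
    continuousOn_growthRate.mul hf.continuous.continuousOn
  have hint : Integrable2 fun R β ↦ (-transport f R β + g R β) * (f R β * phi1 R β) := by
    simpa only [mul_left_comm] using hs.integrable2_mul_mul_phi1 hf.continuous
      (g := fun R β ↦ -transport f R β + g R β) (hT.add hg)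
  rw [inner2_eq_setIntegral hint]
  simp only [mul_left_comm (_ + _)]
  rw [hs.setIntegral_mul_add_mul_phi1 hf.continuous hT hg,
    hs.setIntegral_mul_add_mul_phi1 hf.continuous hD hg]
  simp only [neg_mul, mul_neg, integral_neg, setIntegral_mul_transport_mul_phi1 hf hs, neg_neg]

end EnergyIdentity

section Sources

variable {α : ℝ} {Ω η : ℝ → ℝ → ℝ}

lemma integral_Γf_mul_sin_two_mul (hα : 0 ≤ α) :
    ∫ β in Ioo 0 (π / 2), Γf α β * sin (2 * β) = 2 / (α + 2) := by
  have hderiv : ∀ β ∈ uIcc 0 (π / 2),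
      HasDerivAt (fun b ↦ -(2 / (α + 2)) * cos b ^ (α + 2)) (Γf α β * sin (2 * β)) β := by
    rw [uIcc_of_le (by positivity)]
    intro β hβ
    have hcos : 0 ≤ cos β := cos_nonneg_of_mem_Icc ⟨by linarith [pi_pos, hβ.1], hβ.2⟩
    refine (((hasDerivAt_cos β).rpow_const (p := α + 2) (.inr (by linarith))).const_mul
      _).congr_deriv ?_
    rw [show α + 2 - 1 = α + 1 by ring, rpow_add_one' hcos (by positivity), sin_two_mul, Γf]
    field_simp
  have hint : IntervalIntegrable (fun β ↦ Γf α β * sin (2 * β)) volume 0 (π / 2) :=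
    ((continuous_cos.rpow_const fun _ ↦ .inr hα).mul (by fun_prop)).intervalIntegrable _ _
  rw [← integral_Ioc_eq_integral_Ioo, ← intervalIntegral.integral_of_le (by positivity),
    intervalIntegral.integral_eq_sub_of_hasDerivAt hderiv hint, cos_pi_div_two, cos_zero, one_rpow,
    zero_rpow (by positivity)]
  ring

lemma two_div_pi_mul_div_cst (hα : 0 < α) : 2 / (π * α) * (α / cst α) = (α + 2) / 2 := by
  rw [cst, integral_Γf_mul_sin_two_mul hα.le]
  field_simp

lemma Γf_nonneg {β : ℝ} (hβ : β ∈ Ioo 0 (π / 2)) : 0 ≤ Γf α β :=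
  rpow_nonneg (cos_nonneg_of_mem_Icc ⟨by linarith [pi_pos, hβ.1], hβ.2.le⟩) α

lemma Γf_le_one (hα : 0 ≤ α) {β : ℝ} (hβ : β ∈ Ioo 0 (π / 2)) : Γf α β ≤ 1 :=
  rpow_le_one (cos_nonneg_of_mem_Icc ⟨by linarith [pi_pos, hβ.1], hβ.2.le⟩) (cos_le_one β) hα

lemma Ωbar_sub_DR {R : ℝ} (hR : 0 < R) (β : ℝ) :
    Ωbar α R β - DR (Ωbar α) R β = α / cst α * Γf α β * (6 * R ^ 2 / (1 + R) ^ 3) := by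
  have hden : HasDerivAt (fun r : ℝ ↦ (1 + r) ^ 2) (2 * (1 + R)) R := by
    simpa using ((hasDerivAt_id R).const_add 1).fun_pow 2
  have hderiv := ((((hasDerivAt_id R).const_mul 3).fun_div hden (by positivity)).const_mul
    (α / cst α * Γf α β)).deriv
  simp only [id] at hderiv
  simp only [DR, Ωbar, hderiv]
  field_simp
  ring

lemma ηbar_sub_DR {R : ℝ} (hR : 0 < R) (β : ℝ) :
    ηbar α R β - DR (ηbar α) R β = α / cst α * Γf α β * (18 * R ^ 2 / (1 + R) ^ 4) := by
  have hden : HasDerivAt (fun r : ℝ ↦ (1 + r) ^ 3) (3 * (1 + R) ^ 2) R := by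
    simpa using ((hasDerivAt_id R).const_add 1).fun_pow 3
  have hderiv := ((((hasDerivAt_id R).const_mul 6).fun_div hden (by positivity)).const_mul
    (α / cst α * Γf α β)).deriv
  simp only [id] at hderiv
  simp only [DR, ηbar, hderiv]
  field_simp
  ring

/-- The nonlocal term `c_ω (Ω̄ - D_R Ω̄)` of `L₁`, computed with the exact value
`c = 4 / (π (α + 2))`. -/
def sourceΩ (α : ℝ) (Ω : ℝ → ℝ → ℝ) (R β : ℝ) : ℝ :=
  (α + 2) / 2 * Γf α β * (-L12 Ω 0 * (6 * R ^ 2 / (1 + R) ^ 3))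

/-- The nonlocal terms `2/(πα) L̃₁₂(Ω) η̄ + c_ω (η̄ - D_R η̄)` of `L₂`, computed with the exact
value `c = 4 / (π (α + 2))`. -/
def sourceη (α : ℝ) (Ω : ℝ → ℝ → ℝ) (R β : ℝ) : ℝ :=
  (α + 2) / 2 * Γf α β * (tL12 Ω R * (6 * R / (1 + R) ^ 3) - L12 Ω 0 * (18 * R ^ 2 / (1 + R) ^ 4))

lemma opL1_eq (hα : 0 < α) {R : ℝ} (hR : 0 < R) (β : ℝ) :
    opL1 α Ω η R β = -transport Ω R β + (-Ω R β + η R β + sourceΩ α Ω R β) := by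
  rw [opL1, transport, sourceΩ, cω, Ωbar_sub_DR hR, ← two_div_pi_mul_div_cst hα]
  ring

lemma opL2_eq (hα : 0 < α) {R : ℝ} (hR : 0 < R) (β : ℝ) :
    opL2 α Ω η R β =
      -transport η R β + ((-2 + 3 / (1 + R)) * η R β + sourceη α Ω R β) := by
  rw [opL2, transport, sourceη, cω, ηbar_sub_DR hR, ηbar, ← two_div_pi_mul_div_cst hα]
  ring

lemma continuousOn_Γf : ContinuousOn (fun p : ℝ × ℝ ↦ Γf α p.2) Qdom := by
  refine .rpow_const (by fun_prop) fun p hp ↦ .inl (ne_of_gt ?_)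
  exact cos_pos_of_mem_Ioo ⟨by linarith [pi_pos, hp.2.1], hp.2.2⟩

lemma continuousOn_sourceΩ : ContinuousOn (uncurry (sourceΩ α Ω)) Qdom :=
  (continuousOn_const.mul continuousOn_Γf).mul (continuousOn_const.mul
    (.div (by fun_prop) (by fun_prop) fun _ hp ↦ pow_ne_zero 3 (one_add_ne_zero_of_mem_Qdom hp)))

lemma continuousOn_sourceη (hT : Continuous (tL12 Ω)) :
    ContinuousOn (uncurry (sourceη α Ω)) Qdom := by
  have hprofile : ContinuousOn (fun p : ℝ × ℝ ↦ 6 * p.1 / (1 + p.1) ^ 3) Qdom :=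
    .div (by fun_prop) (by fun_prop) fun _ hp ↦ pow_ne_zero 3 (one_add_ne_zero_of_mem_Qdom hp)
  have hdefect : ContinuousOn (fun p : ℝ × ℝ ↦ 18 * p.1 ^ 2 / (1 + p.1) ^ 4) Qdom :=
    .div (by fun_prop) (by fun_prop) fun _ hp ↦ pow_ne_zero 4 (one_add_ne_zero_of_mem_Qdom hp)
  exact (continuousOn_const.mul continuousOn_Γf).mul
    (((hT.comp continuous_fst).continuousOn.mul hprofile).sub (continuousOn_const.mul hdefect))

lemma inv_one_add_pow_le {R : ℝ} (hR : 0 ≤ R) {n : ℕ} (hn : 2 ≤ n) :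
    ((1 + R) ^ n)⁻¹ ≤ (1 + R ^ 2)⁻¹ := by
  gcongr
  calc 1 + R ^ 2 ≤ (1 + R) ^ 2 := by nlinarith
    _ ≤ (1 + R) ^ n := pow_le_pow_right₀ (by linarith) hn

lemma sq_sourceΩ_mul_le (hα : 0 ≤ α) {R β : ℝ} (hp : (R, β) ∈ Qdom) :
    sourceΩ α Ω R β ^ 2 * ((1 + R) ^ 4 / R ^ 4) ≤
      36 * ((α + 2) / 2) ^ 2 * (L12 Ω 0 ^ 2 * (1 + R ^ 2)⁻¹) := by
  have hR : 0 < R := hp.1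
  calc
    _ = 36 * ((α + 2) / 2) ^ 2 * (L12 Ω 0 ^ 2 * ((1 + R) ^ 2)⁻¹) * Γf α β ^ 2 := by
      rw [sourceΩ]
      field_simp
      ring
    _ ≤ 36 * ((α + 2) / 2) ^ 2 * (L12 Ω 0 ^ 2 * (1 + R ^ 2)⁻¹) * 1 := by
      gcongr ?_ * (_ * ?_) * ?_
      · exact inv_one_add_pow_le hR.le le_rfl
      · exact pow_le_one₀ (Γf_nonneg hp.2) (Γf_le_one hα hp.2)
    _ = _ := mul_one _

lemma sq_sourceη_mul_le (hα : 0 ≤ α) {R β : ℝ} (hp : (R, β) ∈ Qdom) :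
    sourceη α Ω R β ^ 2 * ((1 + R) ^ 4 / R ^ 4) ≤
      648 * ((α + 2) / 2) ^ 2 * (L12 Ω 0 ^ 2 * (1 + R ^ 2)⁻¹ + (tL12 Ω R / R) ^ 2) := by
  have hR : 0 < R := hp.1
  have hΓ : Γf α β ^ 2 ≤ 1 := pow_le_one₀ (Γf_nonneg hp.2) (Γf_le_one hα hp.2)
  have hinv : ((1 + R) ^ 2)⁻¹ ≤ 1 := inv_le_one_of_one_le₀ (one_le_pow₀ (by linarith))
  have sq_sub_le (x y : ℝ) : (6 * x - 18 * y) ^ 2 ≤ 2 * (18 ^ 2 * (y ^ 2 + x ^ 2)) := by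
    nlinarith [sq_nonneg (x + y), sq_nonneg x, sq_nonneg y]
  calc
    _ = ((α + 2) / 2) ^ 2 * Γf α β ^ 2 *
        (6 * (tL12 Ω R / R * (1 + R)⁻¹) - 18 * (L12 Ω 0 * ((1 + R) ^ 2)⁻¹)) ^ 2 := by
      rw [sourceη]
      field_simp
    _ ≤ ((α + 2) / 2) ^ 2 * 1 * (2 * (18 ^ 2 * (L12 Ω 0 ^ 2 * ((1 + R) ^ 4)⁻¹ +
          (tL12 Ω R / R) ^ 2 * ((1 + R) ^ 2)⁻¹))) := by
      gcongr
      refine (sq_sub_le _ _).trans_eq ?_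
      field_simp
    _ ≤ ((α + 2) / 2) ^ 2 * 1 * (2 * (18 ^ 2 * (L12 Ω 0 ^ 2 * (1 + R ^ 2)⁻¹ +
          (tL12 Ω R / R) ^ 2 * 1))) := by
      gcongr ?_ * 1 * (2 * (_ * (_ * ?_ + _ * ?_)))
      exact inv_one_add_pow_le hR.le (by norm_num)
    _ = _ := by ring

end Sources

section Coercivity

lemma local_quadraticForm_le {t d : ℝ} (ht : t ∈ Icc 0 1) (hd : d ≤ 1 / 2 - 197 / 100 * t)
    (x y : ℝ) :
    (d - 1) * x ^ 2 + x * y + (d - 2 + 3 * t) * y ^ 2 ≤ -(1 / 5) * (x ^ 2 + y ^ 2) := by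
  have hx : (d - 1) * x ^ 2 ≤ (-(1 / 2) - 197 / 100 * t) * x ^ 2 :=
    mul_le_mul_of_nonneg_right (by linarith) (sq_nonneg x)
  have hy : (d - 2 + 3 * t) * y ^ 2 ≤ (-(3 / 2) + 103 / 100 * t) * y ^ 2 :=
    mul_le_mul_of_nonneg_right (by linarith) (sq_nonneg y)
  -- The bound is affine in `t`, so it suffices to check the endpoints `t = 0` and `t = 1`.
  have at_zero : 0 ≤ (1 - t) * (3 / 10 * x ^ 2 - x * y + 13 / 10 * y ^ 2) :=
    mul_nonneg (sub_nonneg.2 ht.2) (by nlinarith [sq_nonneg (x - 5 / 3 * y), sq_nonneg y])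
  have at_one : 0 ≤ t * (227 / 100 * x ^ 2 - x * y + 27 / 100 * y ^ 2) :=
    mul_nonneg ht.1 (by nlinarith [sq_nonneg (x - 1 / 2 * y), sq_nonneg x])
  linarith

lemma quadraticForm_add_source_le {t d : ℝ} (ht : t ∈ Icc 0 1) (hd : d ≤ 1 / 2 - 197 / 100 * t)
    (x y a b : ℝ) :
    x * (d * x + (-x + y + a)) + y * (d * y + ((-2 + 3 * t) * y + b)) ≤
      -(1 / 6) * (x ^ 2 + y ^ 2) + 15 / 2 * (a ^ 2 + b ^ 2) := by
  have young (u c : ℝ) : 2 * u * c ≤ 1 / 15 * u ^ 2 + (1 / 15)⁻¹ * c ^ 2 :=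
    two_mul_le_add_mul_sq (by norm_num)
  linarith [local_quadraticForm_le ht hd x y, young x a, young y b]

end Coercivity

section AngularWeight

lemma rpow_neg_sin_two_mul_le {σ : ℝ} (hσ : 0 ≤ σ) {β : ℝ} (hβ : β ∈ Ioo 0 (π / 2)) :
    sin (2 * β) ^ (-σ) ≤ β ^ (-σ) + (π / 2 - β) ^ (-σ) := by
  have jordan {x : ℝ} (hx : 0 < x) (hx' : x ≤ π / 4) : sin (2 * x) ^ (-σ) ≤ x ^ (-σ) := by
    refine rpow_le_rpow_of_nonpos hx ?_ (neg_nonpos.2 hσ)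
    refine le_trans ?_ (mul_le_sin (x := 2 * x) (by positivity) (by linarith))
    rw [div_mul_eq_mul_div, le_div_iff₀ pi_pos]
    nlinarith [pi_le_four]
  have hβ' : 0 < π / 2 - β := sub_pos.2 hβ.2
  rcases le_total β (π / 4) with h | h
  · exact le_add_of_le_of_nonneg (jordan hβ.1 h) (rpow_nonneg hβ'.le _)
  · rw [← sin_pi_sub, show π - 2 * β = 2 * (π / 2 - β) by ring]
    exact le_add_of_nonneg_of_le (rpow_nonneg hβ.1.le _) (jordan hβ' (by linarith))

lemma integrableOn_rpow_neg_sin_two_mul {σ : ℝ} (hσ : 0 ≤ σ) (hσ' : σ < 1) :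
    IntegrableOn (fun β ↦ sin (2 * β) ^ (-σ)) (Ioo 0 (π / 2)) := by
  have hpow : IntervalIntegrable (fun β : ℝ ↦ β ^ (-σ)) volume 0 (π / 2) :=
    intervalIntegral.intervalIntegrable_rpow' (by linarith)
  have hpow' : IntervalIntegrable (fun β : ℝ ↦ (π / 2 - β) ^ (-σ)) volume 0 (π / 2) := by
    simpa using (hpow.comp_sub_left (π / 2)).symm
  have hbound := (intervalIntegrable_iff_integrableOn_Ioo_of_le (by positivity)).1 (hpow.add hpow')
  refine hbound.mono' (Measurable.aestronglyMeasurable (by fun_prop)) ?_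
  filter_upwards [ae_restrict_mem measurableSet_Ioo] with β hβ
  rw [norm_of_nonneg (rpow_nonneg (sin_two_mul_pos hβ).le _)]
  exact rpow_neg_sin_two_mul_le hσ hβ

end AngularWeight

section Nonlocal

/-- The integrand in `s` of `L₁₂(Ω)`, so that `L₁₂(Ω)(R) = ∫_R^∞ radialDensity Ω`. -/
def radialDensity (Ω : ℝ → ℝ → ℝ) (s : ℝ) : ℝ :=
  ∫ β in Ioo 0 (π / 2), Ω s β * sin (2 * β) / s

variable {Ω : ℝ → ℝ → ℝ}

lemma integrable_radialDensity (hΩ : Continuous (uncurry Ω)) (hs : suppIn Ω) :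
    Integrable (radialDensity Ω) := by
  have hkernel : ContinuousOn (uncurry fun s β : ℝ ↦ sin (2 * β) / s) Qdom :=
    .div (by fun_prop) (by fun_prop) fun p hp ↦ (mem_Ioi.1 hp.1).ne'
  have hint := (hs.integrable_mul hΩ hkernel).integrableOn (s := univ ×ˢ Ioo 0 (π / 2))
  rw [IntegrableOn, Measure.volume_eq_prod, ← Measure.prod_restrict, Measure.restrict_univ] at hint
  unfold radialDensity
  simpa only [mul_div_assoc, uncurry] using hint.integral_prod_left

lemma tL12_eq_neg_intervalIntegral (hΩ : Continuous (uncurry Ω)) (hs : suppIn Ω) (R : ℝ) :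
    tL12 Ω R = -∫ s in (0 : ℝ)..R, radialDensity Ω s := by
  have hint := integrable_radialDensity hΩ hs
  rw [← intervalIntegral.integral_Ioi_sub_Ioi' hint.integrableOn hint.integrableOn, neg_sub]
  rfl

lemma continuous_tL12 (hΩ : Continuous (uncurry Ω)) (hs : suppIn Ω) : Continuous (tL12 Ω) := by
  rw [funext (tL12_eq_neg_intervalIntegral hΩ hs)]
  exact (intervalIntegral.continuous_primitive
    (fun _ _ ↦ (integrable_radialDensity hΩ hs).intervalIntegrable) 0).neg

lemma exists_abs_tL12_le (hΩ : Continuous (uncurry Ω)) (hs : suppIn Ω) :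
    ∃ B, ∀ R, |tL12 Ω R| ≤ B := by
  refine ⟨∫ s, |radialDensity Ω s|, fun R ↦ ?_⟩
  rw [tL12_eq_neg_intervalIntegral hΩ hs, abs_neg]
  exact intervalIntegral.norm_integral_le_integral_norm_uIoc.trans
    (setIntegral_le_integral (integrable_radialDensity hΩ hs).norm
      (.of_forall fun s ↦ norm_nonneg _))

lemma exists_tL12_eq_zero (hΩ : Continuous (uncurry Ω)) (hs : suppIn Ω) :
    ∃ a > 0, ∀ R < a, tL12 Ω R = 0 := by
  obtain ⟨a, ha, hΩa⟩ := hs.exists_radius_pos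
  refine ⟨a, ha, fun R hR ↦ ?_⟩
  rw [tL12_eq_neg_intervalIntegral hΩ hs, neg_eq_zero]
  refine intervalIntegral.integral_zero_ae (.of_forall fun s hsR ↦ ?_)
  have hsa : s < a := hsR.2.trans_lt (max_lt ha hR)
  simp [radialDensity, hΩa s hsa]

lemma integrableOn_sq_tL12_div (hΩ : Continuous (uncurry Ω)) (hs : suppIn Ω) :
    IntegrableOn (fun R ↦ (tL12 Ω R / R) ^ 2) (Ioi 0) := by
  obtain ⟨B, hB⟩ := exists_abs_tL12_le hΩ hs
  obtain ⟨a, ha, hzero⟩ := exists_tL12_eq_zero hΩ hs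
  have hmeas : AEStronglyMeasurable (fun R ↦ (tL12 Ω R / R) ^ 2) (volume.restrict (Ioi 0)) :=
    (((continuous_tL12 hΩ hs).measurable.div measurable_id).pow_const 2).aestronglyMeasurable
  refine (integrable_inv_one_add_sq.const_mul (B ^ 2 * (1 + (a ^ 2)⁻¹))).integrableOn.mono' hmeas ?_
  filter_upwards [ae_restrict_mem measurableSet_Ioi] with R hR
  have hR : 0 < R := hR
  rw [norm_of_nonneg (sq_nonneg _), div_pow]
  rcases lt_or_ge R a with hRa | hRa
  · rw [hzero R hRa]
    simp only [ne_eq, OfNat.ofNat_ne_zero, not_false_eq_true, zero_pow, zero_div]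
    positivity
  calc tL12 Ω R ^ 2 / R ^ 2 ≤ B ^ 2 / R ^ 2 := by
        gcongr ?_ / _
        exact sq_le_sq' (neg_le_of_abs_le (hB R)) (le_of_abs_le (hB R))
    _ = B ^ 2 * (1 + (R ^ 2)⁻¹) * (1 + R ^ 2)⁻¹ := by field_simp; ring
    _ ≤ B ^ 2 * (1 + (a ^ 2)⁻¹) * (1 + R ^ 2)⁻¹ := by gcongr

end Nonlocal

section EnergyEstimate

variable {α : ℝ} {Ω η f g : ℝ → ℝ → ℝ}

/-- The mass of the angular factor `sin(2β)^{-σ}` of `φ₁`. -/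
def angularMass : ℝ := ∫ β in Ioo 0 (π / 2), sin (2 * β) ^ (-(99 / 100 : ℝ))

/-- Up to a constant, the radial part of the `φ₁`-weighted squares of the nonlocal sources. -/
def sourceDensity (Ω : ℝ → ℝ → ℝ) (R : ℝ) : ℝ :=
  L12 Ω 0 ^ 2 * (1 + R ^ 2)⁻¹ + (tL12 Ω R / R) ^ 2

lemma integrableOn_sourceDensity (hΩ : Continuous (uncurry Ω)) (hs : suppIn Ω) :
    IntegrableOn (sourceDensity Ω) (Ioi 0) :=
  (integrable_inv_one_add_sq.integrableOn.const_mul _).add (integrableOn_sq_tL12_div hΩ hs)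

lemma integral_sourceDensity (hΩ : Continuous (uncurry Ω)) (hs : suppIn Ω) :
    ∫ R in Ioi 0, sourceDensity Ω R =
      π / 2 * L12 Ω 0 ^ 2 + normR (fun R ↦ tL12 Ω R / R) ^ 2 := by
  simp only [sourceDensity]
  rw [integral_add (integrable_inv_one_add_sq.integrableOn.const_mul _)
    (integrableOn_sq_tL12_div hΩ hs), integral_const_mul, integral_Ioi_inv_one_add_sq, arctan_zero,
    sub_zero, mul_comm, sq_normR]

lemma integrableOn_sourceDensity_mul (hΩ : Continuous (uncurry Ω)) (hs : suppIn Ω) :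
    IntegrableOn (fun p : ℝ × ℝ ↦ sourceDensity Ω p.1 * sin (2 * p.2) ^ (-(99 / 100 : ℝ)))
      Qdom := by
  have h := (integrableOn_sourceDensity hΩ hs).mul_prod
    (integrableOn_rpow_neg_sin_two_mul (σ := 99 / 100) (by norm_num) (by norm_num))
  rwa [Measure.prod_restrict] at h

lemma setIntegral_sourceDensity_mul (hΩ : Continuous (uncurry Ω)) (hs : suppIn Ω) :
    ∫ p in Qdom, sourceDensity Ω p.1 * sin (2 * p.2) ^ (-(99 / 100 : ℝ)) =
      (π / 2 * L12 Ω 0 ^ 2 + normR (fun R ↦ tL12 Ω R / R) ^ 2) * angularMass := by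
  rw [← integral_sourceDensity hΩ hs]
  exact setIntegral_prod_mul (sourceDensity Ω) (fun β ↦ sin (2 * β) ^ (-(99 / 100 : ℝ))) _ _

lemma sq_source_mul_phi1_le (hα : 0 ≤ α) {R β : ℝ} (hp : (R, β) ∈ Qdom) :
    (sourceΩ α Ω R β ^ 2 + sourceη α Ω R β ^ 2) * phi1 R β ≤
      684 * ((α + 2) / 2) ^ 2 * (sourceDensity Ω R * sin (2 * β) ^ (-(99 / 100 : ℝ))) := by
  have hsin := rpow_nonneg (sin_two_mul_pos hp.2).le (-(99 / 100 : ℝ))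
  have hT : 0 ≤ ((α + 2) / 2) ^ 2 * (tL12 Ω R / R) ^ 2 := by positivity
  rw [phi1, ← mul_assoc, ← mul_assoc, add_mul]
  gcongr
  rw [sourceDensity]
  linarith [sq_sourceΩ_mul_le (Ω := Ω) hα hp, sq_sourceη_mul_le (Ω := Ω) hα hp]

lemma energyDensity_le (hα : 0 ≤ α) {R β : ℝ} (hp : (R, β) ∈ Qdom) :
    Ω R β * ((growthRate R β * Ω R β + (-Ω R β + η R β + sourceΩ α Ω R β)) * phi1 R β) +
        η R β * ((growthRate R β * η R β +
          ((-2 + 3 / (1 + R)) * η R β + sourceη α Ω R β)) * phi1 R β) ≤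
      -(1 / 6) * (Ω R β ^ 2 * phi1 R β + η R β ^ 2 * phi1 R β) +
        5130 * ((α + 2) / 2) ^ 2 * (sourceDensity Ω R * sin (2 * β) ^ (-(99 / 100 : ℝ))) := by
  have hR : 0 < R := hp.1
  have ht : 1 / (1 + R) ∈ Icc 0 1 :=
    ⟨by positivity, div_le_one_of_le₀ (by linarith) (by positivity)⟩
  have hlocal := mul_le_mul_of_nonneg_right (quadraticForm_add_source_le ht (growthRate_le hR β)
    (Ω R β) (η R β) (sourceΩ α Ω R β) (sourceη α Ω R β)) (phi1_nonneg hp)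
  rw [mul_one_div] at hlocal
  linarith [sq_source_mul_phi1_le (Ω := Ω) hα hp]

lemma inner2_congr_left {f' : ℝ → ℝ → ℝ} (h : ∀ R > 0, ∀ β, f R β = f' R β) :
    inner2 f g = inner2 f' g :=
  setIntegral_congr_fun measurableSet_Ioi fun R hR ↦ by simp only [h R hR]

lemma integrableOn_energyDensity (hf : ContDiff ℝ 1 (uncurry f))
    (hs : suppIn f) (hg : ContinuousOn (uncurry g) Qdom) :
    IntegrableOn (fun p ↦ f p.1 p.2 *
      ((growthRate p.1 p.2 * f p.1 p.2 + g p.1 p.2) * phi1 p.1 p.2)) Qdom :=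
  hs.integrable2_mul_mul_phi1 hf.continuous (g := fun R β ↦ growthRate R β * f R β + g R β)
    ((continuousOn_growthRate.mul hf.continuous.continuousOn).add hg)

lemma integrableOn_sq_mul_phi1 (hf : Continuous (uncurry f)) (hs : suppIn f) :
    IntegrableOn (fun p ↦ f p.1 p.2 ^ 2 * phi1 p.1 p.2) Qdom := by
  refine (hs.integrable2_mul_mul_phi1 hf hf.continuousOn).congr_fun (fun p _ ↦ ?_)
    measurableSet_Qdom
  rw [uncurry, ← mul_assoc, sq]

lemma continuousOn_lowerOrder_opL1 (hΩ : Continuous (uncurry Ω)) (hη : Continuous (uncurry η)) :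
    ContinuousOn (uncurry fun R β ↦ -Ω R β + η R β + sourceΩ α Ω R β) Qdom :=
  (hΩ.neg.add hη).continuousOn.add continuousOn_sourceΩ

lemma continuousOn_lowerOrder_opL2 (hΩ : Continuous (uncurry Ω)) (hsΩ : suppIn Ω)
    (hη : Continuous (uncurry η)) :
    ContinuousOn (uncurry fun R β ↦ (-2 + 3 / (1 + R)) * η R β + sourceη α Ω R β) Qdom :=
  ((continuousOn_const.add (continuousOn_div_one_add 3)).mul hη.continuousOn).add
    (continuousOn_sourceη (continuous_tL12 hΩ hsΩ))

lemma energy_estimate (hα : 0 < α) (hΩ : ContDiff ℝ 1 (uncurry Ω)) (hη : ContDiff ℝ 1 (uncurry η))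
    (hsΩ : suppIn Ω) (hsη : suppIn η) :
    inner2 (opL1 α Ω η) (fun R β ↦ Ω R β * phi1 R β) +
        inner2 (opL2 α Ω η) (fun R β ↦ η R β * phi1 R β) ≤
      -(1 / 6) * (norm2 (fun R β ↦ Ω R β * √(phi1 R β)) ^ 2 +
          norm2 (fun R β ↦ η R β * √(phi1 R β)) ^ 2) +
        5130 * ((α + 2) / 2) ^ 2 *
          ((π / 2 * L12 Ω 0 ^ 2 + normR (fun R ↦ tL12 Ω R / R) ^ 2) * angularMass) := by
  have hgΩ := continuousOn_lowerOrder_opL1 (α := α) hΩ.continuous hη.continuous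
  have hgη := continuousOn_lowerOrder_opL2 (α := α) hΩ.continuous hsΩ hη.continuous
  have hΩ₁ := integrableOn_energyDensity hΩ hsΩ hgΩ
  have hη₁ := integrableOn_energyDensity hη hsη hgη
  have hΩ₂ := integrableOn_sq_mul_phi1 hΩ.continuous hsΩ
  have hη₂ := integrableOn_sq_mul_phi1 hη.continuous hsη
  have hsource := integrableOn_sourceDensity_mul hΩ.continuous hsΩ
  have hmono := setIntegral_mono_on (hΩ₁.add hη₁)
    (((hΩ₂.add hη₂).const_mul (-(1 / 6))).add (hsource.const_mul (5130 * ((α + 2) / 2) ^ 2)))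
    measurableSet_Qdom fun p hp ↦ energyDensity_le hα.le hp
  rw [integral_add' hΩ₁ hη₁, integral_add' ((hΩ₂.add hη₂).const_mul _) (hsource.const_mul _),
    integral_const_mul, integral_const_mul, integral_add' hΩ₂ hη₂] at hmono
  rwa [inner2_congr_left fun R hR ↦ opL1_eq hα hR, inner2_congr_left fun R hR ↦ opL2_eq hα hR,
    inner2_neg_transport_add hΩ hsΩ hgΩ, inner2_neg_transport_add hη hsη hgη,
    sq_norm2_mul_sqrt (fun _ ↦ phi1_nonneg) hΩ₂, sq_norm2_mul_sqrt (fun _ ↦ phi1_nonneg) hη₂,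
    ← setIntegral_sourceDensity_mul hΩ.continuous hsΩ]

end EnergyEstimate

theorem weighted_L2_estimate_more_singular_general (α₀ : ℝ) :
    ∃ K₃ : ℝ, 0 < K₃ ∧ ∀ α : ℝ, 0 < α → α ≤ α₀ →
      ∀ Ω η : ℝ → ℝ → ℝ,
        ContDiff ℝ 1 (uncurry Ω) → ContDiff ℝ 1 (uncurry η) → suppIn Ω → suppIn η →
        inner2 (opL1 α Ω η) (fun R β ↦ Ω R β * phi1 R β) +
            inner2 (opL2 α Ω η) (fun R β ↦ η R β * phi1 R β) ≤
          -(1 / 6) * (norm2 (fun R β ↦ Ω R β * √(phi1 R β)) ^ 2 +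
              norm2 (fun R β ↦ η R β * √(phi1 R β)) ^ 2) +
            K₃ * (L12 Ω 0 ^ 2 + normR (fun R ↦ tL12 Ω R / R) ^ 2) := by
  have hmass : 0 ≤ angularMass := setIntegral_nonneg measurableSet_Ioo fun β hβ ↦
    rpow_nonneg (sin_two_mul_pos hβ).le _
  refine ⟨5130 * ((|α₀| + 2) / 2) ^ 2 * 2 * (angularMass + 1), by positivity,
    fun α hα hαα₀ Ω η hΩ hη hsΩ hsη ↦ (energy_estimate hα hΩ hη hsΩ hsη).trans ?_⟩
  rw [add_le_add_iff_left]
  set A := L12 Ω 0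
  set N := normR fun R ↦ tL12 Ω R / R
  calc 5130 * ((α + 2) / 2) ^ 2 * ((π / 2 * A ^ 2 + N ^ 2) * angularMass)
      ≤ 5130 * ((|α₀| + 2) / 2) ^ 2 * (2 * (A ^ 2 + N ^ 2) * (angularMass + 1)) := by
        gcongr
        · exact hαα₀.trans (le_abs_self α₀)
        · nlinarith [pi_le_four, sq_nonneg A, sq_nonneg N]
        · linarith
    _ = _ := by ring

/-- weighted `L²` estimate of `Ω, η` with the more singular weight `φ₁`. -/
theorem weighted_L2_estimate_more_singular :
    ∃ K₃ : ℝ, 0 < K₃ ∧ ∀ α : ℝ, 0 < α → α ≤ 1/1000 →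
      ∀ Ω η : ℝ → ℝ → ℝ,
        ContDiff ℝ 1 (Function.uncurry Ω) → ContDiff ℝ 1 (Function.uncurry η) →
        suppIn Ω → suppIn η →
        inner2 (opL1 α Ω η) (fun R β => Ω R β * phi1 R β)
            + inner2 (opL2 α Ω η) (fun R β => η R β * phi1 R β)
          ≤ -(1/6) *
              ((norm2 (fun R β => Ω R β * Real.sqrt (phi1 R β)))^2
                + (norm2 (fun R β => η R β * Real.sqrt (phi1 R β)))^2)
            + K₃ * ((L12 Ω 0)^2 + (normR (fun R => tL12 Ω R / R))^2) :=
  weighted_L2_estimate_more_singular_general (1 / 1000)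

end Paper
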